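/- Let α ∈ ℂ with α ≠ 0, let R ∈ ℂ(z)^{m×m}, and define G ∈ ℂ(z)^{m×m} entrywise by G_{ij} := the substitution of (α + α·z)/(conj(α) − conj(α)·z) into R_{ij}. Then R is para-Hermitian if and only if G is *-even, i.e. G^* = G(−z), where G(−z) is the matrix obtained from G by entrywise substitution of −z for z. -/

import Mathlib

open Polynomial Matrix

set_option synthInstance.maxHeartbeats 1000000
set_option maxHeartbeats 1000000

noncomputable section

/-- Coefficientwise complex conjugation on rational functions. -/
def conjRF : RatFunc ℂ →+* RatFunc ℂ :=
  RatFunc.mapRingHom (Polynomial.mapRingHom (starRingEnd ℂ))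
    (by
      intro x hx
      simp only [Submonoid.mem_comap, mem_nonZeroDivisors_iff_ne_zero] at *
      intro h
      exact hx (Polynomial.map_injective _ (starRingEnd ℂ).injective (by simpa using h)))

/-- Substitution of `g` for the variable in `f`. -/
def subst (g f : RatFunc ℂ) : RatFunc ℂ := RatFunc.eval (algebraMap ℂ (RatFunc ℂ)) g f

/-- Constant complex matrices regarded as matrices over `ℂ(z)`. -/
def toRF {n o : Type*} (A : Matrix n o ℂ) : Matrix n o (RatFunc ℂ) :=
  A.map (algebraMap ℂ (RatFunc ℂ))

/-- The para-conjugate `R^*(1/z)`. -/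
def paraConj {n : Type*} (R : Matrix n n (RatFunc ℂ)) : Matrix n n (RatFunc ℂ) :=
  fun i j => subst (RatFunc.X)⁻¹ (conjRF (R j i))

def IsParaHermitian {n : Type*} (R : Matrix n n (RatFunc ℂ)) : Prop := paraConj R = R

def IsParaSkewHermitian {n : Type*} (R : Matrix n n (RatFunc ℂ)) : Prop := paraConj R = -R

/-- The variable `z` of `ℂ(z)`. -/
def zz : RatFunc ℂ := RatFunc.X

/-- Coefficientwise-conjugate transpose of a matrix over `ℂ(z)`. -/
def conjT {a b : Type*} (R : Matrix a b (RatFunc ℂ)) : Matrix b a (RatFunc ℂ) :=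
  fun i j => conjRF (R j i)

/-- Entrywise substitution of `g` into a matrix over `ℂ(z)`. -/
def substMat {a b : Type*} (g : RatFunc ℂ) (R : Matrix a b (RatFunc ℂ)) :
    Matrix a b (RatFunc ℂ) :=
  fun i j => subst g (R i j)

/-- Substitution of a transcendental element is a ring homomorphism. -/
lemma subst_hom (g : RatFunc ℂ) (hg : Transcendental ℂ g) :
    ∃ φ : RatFunc ℂ →+* RatFunc ℂ, (∀ f, φ f = subst g f) ∧ (∀ a, φ (RatFunc.C a) = RatFunc.C a)
      ∧ φ RatFunc.X = g := by
  have hinj := transcendental_iff_injective.mp hg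
  have hle : nonZeroDivisors ℂ[X] ≤ (nonZeroDivisors (RatFunc ℂ)).comap (aeval g : ℂ[X] →ₐ[ℂ] RatFunc ℂ).toRingHom := by
    intro x hx
    simp only [Submonoid.mem_comap, mem_nonZeroDivisors_iff_ne_zero] at *
    intro h
    exact hx (hinj (by simpa using h))
  have key : ∀ f, RatFunc.liftRingHom (aeval g : ℂ[X] →ₐ[ℂ] RatFunc ℂ).toRingHom hle f
      = subst g f := by
    intro f
    rw [RatFunc.liftRingHom_apply]
    rfl
  refine ⟨_, key, ?_, ?_⟩
  · intro a
    rw [key, subst, RatFunc.eval_C]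
    rfl
  · rw [key, subst, RatFunc.eval_X]

lemma ratFunc_hom_ext (φ ψ : RatFunc ℂ →+* RatFunc ℂ)
    (hC : ∀ a, φ (RatFunc.C a) = ψ (RatFunc.C a)) (hX : φ RatFunc.X = ψ RatFunc.X)
    (f : RatFunc ℂ) : φ f = ψ f := by
  have hp : φ.comp (algebraMap ℂ[X] (RatFunc ℂ)) = ψ.comp (algebraMap ℂ[X] (RatFunc ℂ)) := by
    apply Polynomial.ringHom_ext
    · intro a
      simpa using hC a
    · simpa using hX
  have hp' : ∀ p, φ (algebraMap ℂ[X] (RatFunc ℂ) p) = ψ (algebraMap ℂ[X] (RatFunc ℂ) p) :=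
    fun p => RingHom.congr_fun hp p
  rw [← RatFunc.num_div_denom f, map_div₀, map_div₀, hp', hp']

lemma conjRF_algebraMap (p : ℂ[X]) : conjRF (algebraMap ℂ[X] (RatFunc ℂ) p)
    = algebraMap ℂ[X] (RatFunc ℂ) (p.map (starRingEnd ℂ)) := by
  have := RatFunc.map_apply_div (R := ℂ) (K := ℂ) (Polynomial.mapRingHom (starRingEnd ℂ)) (by
      intro x hx
      simp only [Submonoid.mem_comap, mem_nonZeroDivisors_iff_ne_zero] at *
      intro h
      exact hx (Polynomial.map_injective _ (starRingEnd ℂ).injective (by simpa using h))) p 1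
  simp only [map_one, div_one] at this
  exact this

lemma conjRF_C (a : ℂ) : conjRF (RatFunc.C a) = RatFunc.C (starRingEnd ℂ a) := by
  rw [← RatFunc.algebraMap_C, conjRF_algebraMap]; simp

lemma conjRF_X : conjRF RatFunc.X = RatFunc.X := by
  rw [← RatFunc.algebraMap_X, conjRF_algebraMap]; simp

lemma add_X_ne (a b : ℂ) (hb : b ≠ 0) : RatFunc.C a + RatFunc.C b * RatFunc.X ≠ 0 := by
  intro h
  rw [← RatFunc.algebraMap_C, ← RatFunc.algebraMap_C, ← RatFunc.algebraMap_X, ← map_mul,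
    ← map_add] at h
  have h2 := (map_eq_zero_iff _ (RatFunc.algebraMap_injective ℂ)).mp h
  have := congrArg (fun p => Polynomial.coeff p 1) h2
  simp [Polynomial.coeff_C] at this
  exact hb this

lemma one_add_ne : (1 + RatFunc.X : RatFunc ℂ) ≠ 0 := by
  simpa using add_X_ne 1 1 one_ne_zero

lemma one_sub_ne : (1 - RatFunc.X : RatFunc ℂ) ≠ 0 := by
  have := add_X_ne 1 (-1) (by simp)
  simpa [sub_eq_add_neg] using this

lemma C_ne (a : ℂ) (ha : a ≠ 0) : RatFunc.C a ≠ 0 :=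
  (map_ne_zero_iff _ RatFunc.C_injective).mpr ha

lemma isAlg_C (a : ℂ) : IsAlgebraic ℂ (RatFunc.C a) := isAlgebraic_algebraMap a

lemma mobius_transc (a b : ℂ) (ha : a ≠ 0) (hb : b ≠ 0) :
    Transcendental ℂ ((RatFunc.C a + RatFunc.C a * RatFunc.X) /
      (RatFunc.C b - RatFunc.C b * RatFunc.X)) := by
  intro h
  set g := (RatFunc.C a + RatFunc.C a * RatFunc.X) /
      (RatFunc.C b - RatFunc.C b * RatFunc.X) with hg
  have ha' := C_ne a ha
  have hb' := C_ne b hb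
  have h1 := one_sub_ne
  have hd : RatFunc.C b - RatFunc.C b * RatFunc.X ≠ 0 := by
    rw [← mul_one_sub]; exact mul_ne_zero hb' h1
  have e : g * (RatFunc.C b - RatFunc.C b * RatFunc.X) =
    RatFunc.C a + RatFunc.C a * RatFunc.X := div_mul_cancel₀ _ hd
  have e2 : (RatFunc.C b * g + RatFunc.C a) * RatFunc.X = RatFunc.C b * g - RatFunc.C a := by
    linear_combination -e
  have h0 : RatFunc.C b * g + RatFunc.C a ≠ 0 := by
    intro h0
    rw [h0, zero_mul] at e2
    have : 2 * RatFunc.C a = 0 := by linear_combination h0 + e2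
    simp [ha] at this
  have hX : RatFunc.X = (RatFunc.C b * g - RatFunc.C a) * (RatFunc.C b * g + RatFunc.C a)⁻¹ := by
    rw [← e2]; field_simp
  refine RatFunc.transcendental_X (K := ℂ) ?_
  rw [hX]
  have hbg := (isAlg_C b).mul h
  exact (hbg.sub (isAlg_C a)).mul (hbg.add (isAlg_C a)).inv

/-- `R` is para-Hermitian iff `G(s) := R((α+αs)/(conj α − conj α s))` is `*`-even. -/
theorem paraHermitian_iff_mobius_alpha_even (m : ℕ) (α : ℂ) (hα : α ≠ 0)
    (R G : Matrix (Fin m) (Fin m) (RatFunc ℂ))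
    (hG : G = substMat ((RatFunc.C α + RatFunc.C α * zz) /
        (RatFunc.C (starRingEnd ℂ α) - RatFunc.C (starRingEnd ℂ α) * zz)) R) :
    IsParaHermitian R ↔ conjT G = substMat (-zz) G := by
  unfold zz at *
  have hβ : starRingEnd ℂ α ≠ 0 := by simpa using hα
  have ha' := C_ne α hα
  have hb' := C_ne _ hβ
  have h1 := one_add_ne
  have h2 := one_sub_ne
  obtain ⟨φ, hφ, hφC, hφX⟩ := subst_hom _ (mobius_transc α (starRingEnd ℂ α) hα hβ)
  obtain ⟨ψ, hψ, hψC, hψX⟩ := subst_hom _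
    (fun h => mobius_transc (starRingEnd ℂ α) α hβ hα (by simpa using h.inv) :
      Transcendental ℂ ((RatFunc.C (starRingEnd ℂ α) + RatFunc.C (starRingEnd ℂ α) * RatFunc.X) /
      (RatFunc.C α - RatFunc.C α * RatFunc.X))⁻¹)
  obtain ⟨ν, hν, hνC, hνX⟩ := subst_hom (-RatFunc.X)
    (fun h => RatFunc.transcendental_X (K := ℂ) (by simpa using h.neg))
  obtain ⟨ι, hι, hιC, hιX⟩ := subst_hom (RatFunc.X)⁻¹
    (fun h => RatFunc.transcendental_X (K := ℂ) (by simpa using h.inv))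
  have k1 : ∀ f, conjRF (φ f) = ψ (ι (conjRF f)) := by
    refine ratFunc_hom_ext (conjRF.comp φ) ((ψ.comp ι).comp conjRF) ?_ ?_
    · intro a
      simp [hφC, hψC, hιC, conjRF_C]
    · simp [hφX, hψX, hιX, conjRF_C, conjRF_X]
  have k2 : ∀ f, ν (φ f) = ψ f := by
    refine ratFunc_hom_ext (ν.comp φ) ψ ?_ ?_
    · intro a
      simp [hφC, hψC, hνC]
    · simp [hφX, hψX, hνC, hνX, sub_eq_add_neg]
  subst hG
  unfold IsParaHermitian
  rw [← Matrix.ext_iff, ← Matrix.ext_iff]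
  refine forall_congr' fun i => forall_congr' fun j => ?_
  simp only [paraConj, conjT, substMat]
  rw [← hι, ← hφ, ← hφ, ← hν, k1, k2]
  exact ψ.injective.eq_iff.symm
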